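/- arXiv:2004.01836 — 2 statements merged into one kernel-verified Lean document; each statement's English description precedes it below -/
import Mathlib

section
/- Let {a_n} be a sequence of nonnegative real numbers, and let a_0, b_0, θ_1, C_2 be nonnegative constants with θ_1 < 1, and let k > 0. Assume that for all n ≥ 1, a_n ≤ b_0 + C_2 k ∑_{j=0}^{n-1} a_j + θ_1 a_{n-1}. Then for all n ≥ 1, a_n ≤ ( b_0/(1−θ_1) + C_2 k a_0/(1−θ_1) + θ_1 a_0 ) · ( 1 + C_2 k/(1−θ_1) )^{n−1}. -/
/-!
Write `d = C₂ k / (1 - θ₁)`, `r = 1 + d` and let `M` be the constant in front of the power.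
If `a (j + 1) ≤ M r ^ j` for all `j < n`, then, since `C₂ k = (1 - θ₁) (r - 1)`, the geometric
sum telescopes to `C₂ k ∑_{j ≤ n} a j ≤ C₂ k a₀ + (1 - θ₁) M (r ^ n - 1)`. As
`b₀ + C₂ k a₀ ≤ (1 - θ₁) M`, the recursion bounds `a (n + 1)` by
`(1 - θ₁) M r ^ n + θ₁ M r ^ (n - 1) ≤ M r ^ n`. The induction carries the pointwise bound
and the bound on the partial sums together.
-/

/-- Discrete Gronwall-type inequality with a cumulative sum term and one
delayed term (Corollary: sequence estimate). -/
theorem gronwall_one_delay (a : ℕ → ℝ) (ha : ∀ n, 0 ≤ a n)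
    (b₀ θ₁ C₂ : ℝ) (hb₀ : 0 ≤ b₀) (hθ₁ : 0 ≤ θ₁) (hC₂ : 0 ≤ C₂)
    (hθ : θ₁ < 1) (k : ℝ) (hk : 0 < k)
    (hrec : ∀ n, 1 ≤ n →
      a n ≤ b₀ + C₂ * k * ∑ j ∈ Finset.range n, a j + θ₁ * a (n - 1)) :
    ∀ n, 1 ≤ n →
      a n ≤ (b₀ / (1 - θ₁) + C₂ * k * a 0 / (1 - θ₁) + θ₁ * a 0)
              * (1 + C₂ * k / (1 - θ₁)) ^ (n - 1) := by
  have hpos : 0 < 1 - θ₁ := by linarith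
  have ha0 := ha 0
  have hc : 0 ≤ C₂ * k := by positivity
  set d := C₂ * k / (1 - θ₁) with hd
  set M := b₀ / (1 - θ₁) + C₂ * k * a 0 / (1 - θ₁) + θ₁ * a 0 with hM
  have hd0 : 0 ≤ d := by positivity
  have hM0 : 0 ≤ M := by positivity
  have hcd : C₂ * k = (1 - θ₁) * d := by rw [hd]; field_simp
  have hMeq : (1 - θ₁) * M = b₀ + C₂ * k * a 0 + (1 - θ₁) * (θ₁ * a 0) := by
    rw [hM]; field_simp
  have hθa : 0 ≤ θ₁ * a 0 := by positivity
  have hMge : b₀ + C₂ * k * a 0 ≤ (1 - θ₁) * M := by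
    have : 0 ≤ (1 - θ₁) * (θ₁ * a 0) := by positivity
    linarith
  have key : ∀ n, a (n + 1) ≤ M * (1 + d) ^ n ∧
      C₂ * k * ∑ j ∈ Finset.range (n + 1), a j
        ≤ C₂ * k * a 0 + (1 - θ₁) * M * ((1 + d) ^ n - 1) := by
    intro n
    induction n with
    | zero =>
      have h1 := hrec 1 le_rfl
      simp only [Finset.sum_range_one, Nat.sub_self] at h1
      -- The delayed term at the first step is `θ₁ * a 0`, which is a summand of `M` itself,
      -- and dividing `b₀ + C₂ * k * a 0` by `1 - θ₁ ≤ 1` only enlarges it.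
      have h2 : b₀ ≤ b₀ / (1 - θ₁) := le_div_self hb₀ hpos (by linarith)
      have h3 : C₂ * k * a 0 ≤ C₂ * k * a 0 / (1 - θ₁) :=
        le_div_self (by positivity) hpos (by linarith)
      refine ⟨?_, by simp⟩
      rw [pow_zero, mul_one]
      linarith
    | succ n ih =>
      obtain ⟨hp, hs⟩ := ih
      have hsum : C₂ * k * ∑ j ∈ Finset.range (n + 1 + 1), a j
          ≤ C₂ * k * a 0 + (1 - θ₁) * M * ((1 + d) ^ (n + 1) - 1) := by
        rw [Finset.sum_range_succ, mul_add]
        have h1 : C₂ * k * a (n + 1) ≤ (1 - θ₁) * d * (M * (1 + d) ^ n) := by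
          rw [← hcd]; exact mul_le_mul_of_nonneg_left hp hc
        calc _ ≤ C₂ * k * a 0 + (1 - θ₁) * M * ((1 + d) ^ n - 1)
              + (1 - θ₁) * d * (M * (1 + d) ^ n) := add_le_add hs h1
          _ = _ := by ring
      refine ⟨?_, hsum⟩
      have h1 := hrec (n + 1 + 1) (by omega)
      rw [Nat.add_sub_cancel] at h1
      have h2 : a (n + 1) ≤ M * (1 + d) ^ (n + 1) :=
        hp.trans (mul_le_mul_of_nonneg_left
          (pow_le_pow_right₀ (by linarith) (Nat.le_succ n)) hM0)
      have h3 := mul_le_mul_of_nonneg_left h2 hθ₁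
      linarith
  intro n hn
  obtain ⟨m, rfl⟩ := Nat.exists_eq_add_of_le' hn
  exact (key m).1
end

section
/- Let m > 0, and let θ, γ, D ≥ 0 with θ < m, and let k > 0. Let {e_n} be a sequence of nonnegative real numbers with e_0 = 0 such that for all n ≥ 1, m e_n ≤ D k + γ k ∑_{j=0}^{n-1} e_j + θ e_{n-1}. Then for all n ≥ 1, e_n ≤ ( D k/(m−θ) ) · ( 1 + γ k/(m−θ) )^{n−1}, and consequently e_n ≤ ( D/(m−θ) ) · exp( γ (n−1) k/(m−θ) ) · k. -/
/-!
Put `a = D k / (m - θ)` and `x = γ k / (m - θ)`. The recursion says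
`m eₙ ≤ (m - θ) (a + x ∑_{j<n} eⱼ) + θ eₙ₋₁`. With `fₙ = a (1 + x)ⁿ⁻¹`, the bounds
`a + x ∑_{j<n} eⱼ ≤ fₙ` and `eₙ ≤ fₙ` propagate together by induction: the first because
`fₙ + x fₙ = fₙ₊₁`, the second because `(m - θ) fₙ₊₁ + θ fₙ ≤ m fₙ₊₁` by monotonicity of `f`.
The exponential form follows from `1 + x ≤ exp x`.
-/

/-- Discrete Gronwall inequality with one delayed term, in normalized form; the bound on the
partial sums is carried along as the second half of the induction. -/
theorem delayed_gronwall {m θ a x : ℝ} (hm : 0 < m) (hθ : 0 ≤ θ) (hθm : θ < m)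
    (ha : 0 ≤ a) (hx : 0 ≤ x) {e : ℕ → ℝ} (he0 : e 0 = 0)
    (hrec : ∀ n, m * e (n + 1) ≤
      (m - θ) * (a + x * ∑ j ∈ Finset.range (n + 1), e j) + θ * e n) (n : ℕ) :
    e (n + 1) ≤ a * (1 + x) ^ n ∧
      a + x * ∑ j ∈ Finset.range (n + 1), e j ≤ a * (1 + x) ^ n := by
  induction n with
  | zero =>
    have h := hrec 0
    simp only [zero_add, Finset.sum_range_one, he0, mul_zero, add_zero] at h
    refine ⟨?_, by simp [he0]⟩
    have : m * e 1 ≤ m * a := by nlinarith [mul_nonneg hθ ha]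
    simpa using le_of_mul_le_mul_left this hm
  | succ n ih =>
    obtain ⟨ih1, ih2⟩ := ih
    have hsum : a + x * ∑ j ∈ Finset.range (n + 1 + 1), e j ≤ a * (1 + x) ^ (n + 1) := by
      rw [Finset.sum_range_succ, pow_succ]
      nlinarith [mul_le_mul_of_nonneg_left ih1 hx]
    refine ⟨?_, hsum⟩
    have hmono : a * (1 + x) ^ n ≤ a * (1 + x) ^ (n + 1) :=
      mul_le_mul_of_nonneg_left (pow_le_pow_right₀ (by linarith) (Nat.le_succ n)) ha
    refine le_of_mul_le_mul_left ?_ hm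
    have h1 := mul_le_mul_of_nonneg_left hsum (sub_nonneg.2 hθm.le)
    have h2 := mul_le_mul_of_nonneg_left (ih1.trans hmono) hθ
    linarith [hrec (n + 1)]


/-- Quantitative core of the first-order error analysis: the recursion
`m eₙ ≤ D k + γ k ∑_{j<n} eⱼ + θ e_{n-1}` with `e₀ = 0` yields a first-order
`O(k)` bound. -/
theorem first_order_error_sequence
    (m θ γ D k : ℝ) (hm : 0 < m) (hθ : 0 ≤ θ) (hγ : 0 ≤ γ) (hD : 0 ≤ D)
    (hθm : θ < m) (hk : 0 < k)
    (e : ℕ → ℝ) (he : ∀ n, 0 ≤ e n) (he0 : e 0 = 0)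
    (hrec : ∀ n, 1 ≤ n →
      m * e n ≤ D * k + γ * k * ∑ j ∈ Finset.range n, e j + θ * e (n - 1)) :
    ∀ n, 1 ≤ n →
      e n ≤ (D * k / (m - θ)) * (1 + γ * k / (m - θ)) ^ (n - 1) ∧
      e n ≤ (D / (m - θ)) * Real.exp (γ * ((n:ℝ) - 1) * k / (m - θ)) * k := by
  have hd : 0 < m - θ := sub_pos.2 hθm
  have ha : 0 ≤ D * k / (m - θ) := by positivity
  have hx : 0 ≤ γ * k / (m - θ) := by positivity
  intro n hn
  obtain ⟨n, rfl⟩ := Nat.exists_eq_add_of_le' hn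
  have key : e (n + 1) ≤ (D * k / (m - θ)) * (1 + γ * k / (m - θ)) ^ n := by
    refine (delayed_gronwall hm hθ hθm ha hx he0 (fun i => ?_) n).1
    have h := hrec (i + 1) (Nat.le_add_left 1 i)
    rw [Nat.add_sub_cancel] at h
    refine h.trans_eq ?_
    field_simp
  rw [Nat.add_sub_cancel]
  refine ⟨key, key.trans ?_⟩
  have hexp : (1 + γ * k / (m - θ)) ^ n ≤
      Real.exp (γ * (((n + 1 : ℕ) : ℝ) - 1) * k / (m - θ)) := by
    have h : γ * (((n + 1 : ℕ) : ℝ) - 1) * k / (m - θ) = n * (γ * k / (m - θ)) := by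
      push_cast
      ring
    rw [h, Real.exp_nat_mul]
    refine pow_le_pow_left₀ (by linarith) ?_ n
    linarith [Real.add_one_le_exp (γ * k / (m - θ))]
  refine (mul_le_mul_of_nonneg_left hexp ha).trans_eq ?_
  ring
end
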